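/- Corollary on inner automorphisms: under the hypotheses that 𝕋₁, 𝕋₂ are equational theories over disjoint signatures each possessing a function symbol that is neither constant nor a projection, every categorical inner automorphism of the free model Mₙ of 𝕋₁ + 𝕋₂ on n generators is the identity; equivalently, a family π of endomorphisms π_h : cod(h) → cod(h) indexed by morphisms h with domain Mₙ is an element of the covariant isotropy group 𝒵_{𝕋₁+𝕋₂}(Mₙ) if and only if π_h = id for every h. -/

import Mathlib

/-- First-order terms over symbols `S` with arity `ar` and variables `V`. -/
inductive Tm (S : Type) (ar : S → ℕ) (V : Type) : Type
  | var : V → Tm S ar V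
  | app : (f : S) → (Fin (ar f) → Tm S ar V) → Tm S ar V

namespace Tm
variable {S : Type} {ar : S → ℕ} {V W : Type}

def mapVar (g : V → W) : Tm S ar V → Tm S ar W
  | var v => var (g v)
  | app f ts => app f (fun i => (ts i).mapVar g)

def bind : Tm S ar V → (V → Tm S ar W) → Tm S ar W
  | var v, g => g v
  | app f ts, g => app f (fun i => (ts i).bind g)

/-- All variables of a term belong to a given set. -/
def VarsIn : Tm S ar V → Set V → Prop
  | var v, A => v ∈ A
  | app _ ts, A => ∀ i, VarsIn (ts i) A

/-- The term contains at least one variable. -/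
def HasVar : Tm S ar V → Prop
  | var _ => True
  | app _ ts => ∃ i, HasVar (ts i)

end Tm

/-- The combined signature: operation symbols of the two theories (`op`),
generator constants `y₁,…,yₙ` (`gen`), and indeterminate constants `x = ind 0`,
`xᵢ = ind i` (`ind`). -/
inductive CSym (F : Bool → Type) (n : ℕ) : Type
  | op : (b : Bool) → F b → CSym F n
  | gen : Fin n → CSym F n
  | ind : ℕ → CSym F n

namespace CSym
variable {F : Bool → Type} {n : ℕ}

def arity (arF : ∀ b, F b → ℕ) : CSym F n → ℕ
  | op b f => arF b f
  | gen _ => 0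
  | ind _ => 0

/-- Which of the four component signatures a symbol belongs to:
`0 = Σ₁`, `1 = Σ₂`, `2 = Σ₃`, `3 = Σ₄`. -/
def sig : CSym F n → Fin 4
  | op false _ => 0
  | op true _ => 1
  | gen _ => 2
  | ind _ => 3

end CSym
section Setup

variable (F : Bool → Type) (arF : ∀ b, F b → ℕ) (n : ℕ)

/-- Closed terms over the combined signature `Σ = Σ₁ ∪ Σ₂ ∪ Σ₃ ∪ Σ₄`. -/
abbrev CT := Tm (CSym F n) (CSym.arity arF) Empty

/-- The root symbol of a closed term. -/
def rootSym : CT F arF n → CSym F n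
  | .var v => v.elim
  | .app f _ => f

/-- All symbols of the closed term satisfy the predicate `P`. -/
def InSig (P : CSym F n → Prop) : CT F arF n → Prop
  | .var v => v.elim
  | .app f ts => P f ∧ ∀ i, InSig P (ts i)

/-- A closed term is pure if all of its symbols belong to a single one of the
four component signatures. -/
def IsPure (t : CT F arF n) : Prop := ∃ k : Fin 4, InSig F arF n (fun s => s.sig = k) t

/-- The rank of a closed term: `0` if pure, and otherwise `1` plus the maximal
rank of its alien subterms. -/
def rank : CT F arF n → ℕ
  | .var v => v.elim
  | .app f ts =>
      Finset.univ.sup fun i =>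
        rank (ts i) + (if (rootSym F arF n (ts i)).sig = f.sig then 0 else 1)

/-- The maximal subterms of `t` whose root is outside signature `k`. -/
def aliensUnder (k : Fin 4) : CT F arF n → Set (CT F arF n)
  | .var v => v.elim
  | .app f ts =>
      if f.sig = k then ⋃ i, aliensUnder k (ts i) else {Tm.app f ts}

/-- The alien subterms of a closed term (relative to the signature of its root). -/
def aliensSet : CT F arF n → Set (CT F arF n)
  | .var v => v.elim
  | .app f ts => ⋃ i, aliensUnder F arF n f.sig (ts i)

/-- All alien subterms at arbitrary depth. -/
def allAliensSet : CT F arF n → Set (CT F arF n)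
  | .var v => v.elim
  | .app f ts =>
      ⋃ i, (if (rootSym F arF n (ts i)).sig = f.sig then (∅ : Set _) else {ts i}) ∪
        allAliensSet (ts i)

/-- View a closed combined term through the layer of theory `b`: keep the
top part built from `Σ_b`-symbols and regard the maximal non-`Σ_b`-rooted
subterms as opaque constants. -/
def layerize (b : Bool) : CT F arF n → Tm (F b) (arF b) (CT F arF n)
  | .app (.op b' f) ts =>
      if h : b' = b then h ▸ (Tm.app f (fun i => layerize b' (ts i)))
      else Tm.var (Tm.app (.op b' f) ts)
  | t => Tm.var t

end Setup
section Setup2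

variable (F : Bool → Type) (arF : ∀ b, F b → ℕ) (n : ℕ)
variable (Ax : ∀ b, Set (Tm (F b) (arF b) ℕ × Tm (F b) (arF b) ℕ))

mutual
/-- The isomorphism relation `≅` on closed combined terms, defined together
with the layer congruences: two terms are isomorphic iff their roots lie in the
same component signature and their alien abstractions are congruent modulo the
corresponding theory (for the constant signatures `Σ₃, Σ₄` this is syntactic
equality). -/
inductive Iso : CT F arF n → CT F arF n → Prop where
  | opEq (b : Bool) (u v : CT F arF n) :
      (∃ g : F b, rootSym F arF n u = .op b g) →
      (∃ g : F b, rootSym F arF n v = .op b g) →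
      LEq b (layerize F arF n b u) (layerize F arF n b v) → Iso u v
  | constEq (t : CT F arF n) :
      ((rootSym F arF n t).sig = 2 ∨ (rootSym F arF n t).sig = 3) → Iso t t

/-- The congruence `≈_b` on `Σ_b`-terms whose constants are closed combined
terms (representing their `≅`-classes): generated by the substitution instances
of the axioms of `𝕋_b` together with the identification of `≅`-related
constants. -/
inductive LEq : (b : Bool) →
    Tm (F b) (arF b) (CT F arF n) → Tm (F b) (arF b) (CT F arF n) → Prop where
  | refl (b) (t) : LEq b t t
  | symm {b s t} : LEq b s t → LEq b t s
  | trans {b s t u} : LEq b s t → LEq b t u → LEq b s u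
  | congr (b) (g : F b) (ts us : Fin (arF b g) → Tm (F b) (arF b) (CT F arF n)) :
      (∀ i, LEq b (ts i) (us i)) → LEq b (.app g ts) (.app g us)
  | varRel (b) (s t : CT F arF n) : Iso s t → LEq b (.var s) (.var t)
  | ax (b) (u v : Tm (F b) (arF b) ℕ) : (u, v) ∈ Ax b →
      ∀ σ : ℕ → Tm (F b) (arF b) (CT F arF n), LEq b (u.bind σ) (v.bind σ)
end

end Setup2
section Setup3

variable (F : Bool → Type) (arF : ∀ b, F b → ℕ) (n : ℕ)
variable (Ax : ∀ b, Set (Tm (F b) (arF b) ℕ × Tm (F b) (arF b) ℕ))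

/-- The combined algebra `𝒜 = Term^c(Σ)/≅`. -/
abbrev Alg := Quot (Iso F arF n Ax)

/-- Provable equality in the theory `𝕋_b` on terms with variables (equivalently
the smallest `Σ_b`-congruence containing all substitution instances of the
axioms of `𝕋_b`); with `V := Alg` this is the congruence `≈_b` on
`Term^c(Σ_b, Term^c(Σ)/≅)`. -/
inductive AxCong (b : Bool) {V : Type} : Tm (F b) (arF b) V → Tm (F b) (arF b) V → Prop where
  | refl (t) : AxCong b t t
  | symm {s t} : AxCong b s t → AxCong b t s
  | trans {s t u} : AxCong b s t → AxCong b t u → AxCong b s u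
  | congr (g : F b) (ts us : Fin (arF b g) → Tm (F b) (arF b) V) :
      (∀ i, AxCong b (ts i) (us i)) → AxCong b (.app g ts) (.app g us)
  | ax (u v : Tm (F b) (arF b) ℕ) : (u, v) ∈ Ax b →
      ∀ σ : ℕ → Tm (F b) (arF b) V, AxCong b (u.bind σ) (v.bind σ)

/-- Abstraction of alien subterms: `[t]ᵇ_≅ ∈ Term^c(Σ_b, Term^c(Σ)/≅)`. -/
def absQ (b : Bool) (t : CT F arF n) : Tm (F b) (arF b) (Alg F arF n Ax) :=
  (layerize F arF n b t).mapVar (Quot.mk _)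

attribute [local instance] Classical.propDecidable

/-- The interpretation `t^𝒜` of a closed combined term in the combined algebra:
a term collapses to (the class of) an alien subterm whose class its alien
abstraction is `≈_b`-congruent to, and is interpreted by its own class
otherwise. -/
noncomputable def interp : CT F arF n → Alg F arF n Ax
  | .app (.op b g) ts =>
      let t' : CT F arF n := .app (.op b g) (fun i => (interp (ts i)).out)
      if h : ∃ u, u ∈ aliensSet F arF n t' ∧
          AxCong F arF Ax b (absQ F arF n Ax b t') (.var (Quot.mk _ u))
      then Quot.mk _ h.choose
      else Quot.mk _ t'
  | t => Quot.mk _ t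

end Setup3
section Setup4

variable (F : Bool → Type) (arF : ∀ b, F b → ℕ) (n : ℕ)
variable (Ax : ∀ b, Set (Tm (F b) (arF b) ℕ × Tm (F b) (arF b) ℕ))

/-- Substitution of a closed term `w` for the indeterminate constant `x_j` in a
closed combined term. -/
def substInd (j : ℕ) (w : CT F arF n) : CT F arF n → CT F arF n
  | .var v => v.elim
  | .app (.ind j') ts => if j' = j then w else .app (.ind j') ts
  | .app f ts => .app f (fun i => substInd j w (ts i))

/-- The indeterminate constant `x_i` as a closed term (`x = xTm 0`). -/
def xTm (i : ℕ) : CT F arF n := .app (.ind i) Fin.elim0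

/-- Replace every indeterminate constant occurring in a term by `x`. -/
def indToX : CT F arF n → CT F arF n
  | .var v => v.elim
  | .app (.ind _) _ => xTm F arF n 0
  | .app f ts => .app f (fun i => indToX (ts i))

/-- Embedding of `Σ_b`-terms into combined terms. -/
def embedOp (b : Bool) {V : Type} : Tm (F b) (arF b) V → Tm (CSym F n) (CSym.arity arF) V
  | .var v => .var v
  | .app g ts => .app (.op b g) (fun i => embedOp b (ts i))

/-- Provable equality for the (combination of the) theories `𝕋_b` (`b ∈ B`) on
closed terms over the sub-signature of symbols satisfying `P`: the smallest
congruence on that set of closed terms containing all substitution instances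
(by closed terms over the sub-signature) of the axioms. -/
inductive PE (B : Set Bool) (P : CSym F n → Prop) : CT F arF n → CT F arF n → Prop where
  | refl (t) : InSig F arF n P t → PE B P t t
  | symm {s t} : PE B P s t → PE B P t s
  | trans {s t u} : PE B P s t → PE B P t u → PE B P s u
  | congr (f : CSym F n) (ts us : Fin (CSym.arity arF f) → CT F arF n) : P f →
      (∀ i, PE B P (ts i) (us i)) → PE B P (.app f ts) (.app f us)
  | ax (b : Bool) (hb : b ∈ B) (u v : Tm (F b) (arF b) ℕ) (h : (u, v) ∈ Ax b)
      (σ : ℕ → CT F arF n) : (∀ m, InSig F arF n P (σ m)) →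
      PE B P ((embedOp F arF n b u).bind σ) ((embedOp F arF n b v).bind σ)

/-- The sub-signature consisting of the operations of the theories in `B`, all
generator constants `y₁,…,yₙ`, and the indeterminates `x_j` with `j ∈ J`. -/
def SigP (B : Set Bool) (J : Set ℕ) : CSym F n → Prop
  | .op b _ => b ∈ B
  | .gen _ => True
  | .ind j => j ∈ J

/-- The (combination of the) theories in `B` is non-trivial: it does not prove
the equation `x = y` for distinct variables (equivalently, it does not identify
two distinct indeterminate constants). -/
def Nontriv (B : Set Bool) : Prop :=
  ¬ PE F arF n Ax B (SigP F n B Set.univ) (xTm F arF n 1) (xTm F arF n 2)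

/-- Membership of (the class of) `t` in the logical isotropy group of the free
model on `n` generators of the combination of the theories in `B`: `t` is a
closed term over the signature extended by the constant `x` that is invertible
under substitution into `x` and commutes generically with every operation. -/
def GIso (B : Set Bool) (t : CT F arF n) : Prop :=
  InSig F arF n (SigP F n B {0}) t ∧
  (∃ tinv, InSig F arF n (SigP F n B {0}) tinv ∧
    PE F arF n Ax B (SigP F n B {0}) (substInd F arF n 0 tinv t) (xTm F arF n 0) ∧
    PE F arF n Ax B (SigP F n B {0}) (substInd F arF n 0 t tinv) (xTm F arF n 0)) ∧
  ∀ b, b ∈ B → ∀ g : F b,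
    PE F arF n Ax B (SigP F n B {j | 1 ≤ j ∧ j ≤ arF b g})
      (substInd F arF n 0 (.app (.op b g) (fun i => xTm F arF n (i.val + 1))) t)
      (.app (.op b g) (fun i => substInd F arF n 0 (xTm F arF n (i.val + 1)) t))

/-- `g` is a projection in `𝕋_b`. -/
def IsProj (b : Bool) (g : F b) : Prop :=
  ∃ i : Fin (arF b g),
    AxCong F arF Ax b (V := ℕ) (.app g (fun j => .var j.val)) (.var i.val)

/-- `g` is constant in `𝕋_b`: `𝕋_b` proves `g(y₁,…,y_m) = s` for pairwise
distinct variables none of which occurs in `s`. -/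
def IsConst (b : Bool) (g : F b) : Prop :=
  ∃ s : Tm (F b) (arF b) ℕ, s.VarsIn {m | arF b g ≤ m} ∧
    AxCong F arF Ax b (V := ℕ) (.app g (fun j => .var j.val)) s

end Setup4
section Models

variable (F : Bool → Type) (arF : ∀ b, F b → ℕ) (n : ℕ)
variable (Ax : ∀ b, Set (Tm (F b) (arF b) ℕ × Tm (F b) (arF b) ℕ))

/-- Evaluation of a `Σ_b`-term in a set equipped with operations. -/
def evalTm {α : Type} (ops : ∀ b (g : F b), (Fin (arF b g) → α) → α)
    (b : Bool) {V : Type} (ρ : V → α) : Tm (F b) (arF b) V → α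
  | .var v => ρ v
  | .app g ts => ops b g (fun i => evalTm ops b ρ (ts i))

/-- A (set-based) model of the combined theory `𝕋₁ + 𝕋₂`. -/
structure TModel where
  carrier : Type
  ops : ∀ b (g : F b), (Fin (arF b g) → carrier) → carrier
  sat : ∀ b u v, (u, v) ∈ Ax b → ∀ ρ : ℕ → carrier,
      evalTm F arF ops b ρ u = evalTm F arF ops b ρ v

/-- Homomorphisms of models. -/
@[ext]
structure TModelHom (M N : TModel F arF Ax) where
  toFun : M.carrier → N.carrier
  map_ops : ∀ b (g : F b) (args : Fin (arF b g) → M.carrier),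
      toFun (M.ops b g args) = N.ops b g (fun i => toFun (args i))

/-- The identity homomorphism. -/
def TModelHom.id (M : TModel F arF Ax) : TModelHom F arF Ax M M :=
  ⟨fun a => a, fun _ _ _ => rfl⟩

/-- Composition of homomorphisms. -/
def TModelHom.comp {M M' M'' : TModel F arF Ax} (h' : TModelHom F arF Ax M' M'')
    (h : TModelHom F arF Ax M M') : TModelHom F arF Ax M M'' :=
  ⟨fun a => h'.toFun (h.toFun a), fun b g args => by
    simp [h.map_ops, h'.map_ops]⟩

/-- `M` together with the `n` elements `gens` is a free model on `n`
generators: the universal property. -/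
def IsFreeOn (M : TModel F arF Ax) (gens : Fin n → M.carrier) : Prop :=
  ∀ (N : TModel F arF Ax) (a : Fin n → N.carrier),
    ∃! h : TModelHom F arF Ax M N, ∀ i, h.toFun (gens i) = a i

end Models

/-!
Assign to each element of a set `X` a root: one of the two theories, or none. If the number of
elements of each root is the same large infinite cardinal, then for each theory `𝕋_b` the set `X`
can be identified with the free `𝕋_b`-algebra on the elements whose root is not `b`. The two
resulting structures make `X` a model of `𝕋₁ + 𝕋₂`, in which the rootless elements freely generate a
submodel `M`, and the elements of `M` are stratified into layers by the number of alternations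
between the two theories.

Let `π` be natural, send the generators of `M₀` to a set `A` of rootless elements of `M` with
infinite complement in the rootless elements, and let `σ` be the component of `π` at this morphism.
Then `σ` commutes with all endomorphisms of `M` fixing `A`. Suppose it fixes no rootless element
outside `A`. Then the values of `σ` at these elements have roots, infinitely many of them the same
root `b`. For `x, x₁, …, x_m` among the latter and a proper `m`-ary symbol `g` of the other theory,
the substitution `x ↦ g(x₁, …, x_m)` turns `σ(x)` into `g(σ(x₁), …, σ(x_m))`. Comparing layers, some
`σ(x_i)` lies in a lower layer than `σ(x)`, which starts an infinite descent. Hence `σ` fixes some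
rootless `x ∉ A`, and as `x` can be sent to any element of any model under `M₀`, naturality makes
all of `π` trivial.
-/

namespace Tm
variable {S : Type} {ar : S → ℕ} {U V W : Type}

theorem bind_bind (t : Tm S ar U) (g : U → Tm S ar V) (h : V → Tm S ar W) :
    (t.bind g).bind h = t.bind fun v => (g v).bind h := by
  induction t with
  | var v => rfl
  | app f ts ih => simp only [bind, ih]

theorem bind_var (t : Tm S ar V) : t.bind var = t := by
  induction t with
  | var v => rfl
  | app f ts ih => simp only [bind, ih]

theorem mapVar_eq_bind (g : V → W) (t : Tm S ar V) : t.mapVar g = t.bind fun v => var (g v) := by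
  induction t with
  | var v => rfl
  | app f ts ih => simp only [mapVar, bind, ih]

theorem mapVar_bind (t : Tm S ar U) (g : U → V) (h : V → Tm S ar W) :
    (t.mapVar g).bind h = t.bind fun v => h (g v) := by
  rw [mapVar_eq_bind, bind_bind]
  rfl

theorem varsIn_bind {A : Set W} {g : V → Tm S ar W} (hg : ∀ v, (g v).VarsIn A) (t : Tm S ar V) :
    (t.bind g).VarsIn A := by
  induction t with
  | var v => exact hg v
  | app _ _ ih => exact ih

/-- Branching data of terms as trees: a leaf for each variable, a node with `ar f` children for
each symbol `f`. -/
abbrev Branching (ar : S → ℕ) (V : Type) : V ⊕ S → Type :=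
  Sum.elim (fun _ => Empty) fun f => Fin (ar f)

/-- Terms as elements of a `W`-type, for which cardinality bounds are available. -/
def toW : Tm S ar V → WType (Branching ar V)
  | var v => ⟨.inl v, Empty.elim⟩
  | app f ts => ⟨.inr f, fun i => (ts i).toW⟩

/-- Left inverse of `Tm.toW`. -/
def ofW : WType (Branching ar V) → Tm S ar V
  | ⟨.inl v, _⟩ => var v
  | ⟨.inr f, ts⟩ => app f fun i => ofW (ts i)

theorem leftInverse_ofW : Function.LeftInverse (ofW (S := S) (ar := ar) (V := V)) toW := by
  intro t
  induction t with
  | var v => rfl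
  | app f ts ih => simp only [toW, ofW, ih]

theorem cardinalMk_le {κ : Cardinal} (hκ : Cardinal.aleph0 ≤ κ) (hS : Cardinal.mk S ≤ κ)
    (hV : Cardinal.mk V ≤ κ) : Cardinal.mk (Tm S ar V) ≤ κ := by
  have finite_branching : ∀ a : V ⊕ S, Finite (Branching ar V a) := by
    rintro (v | f)
    · exact inferInstanceAs (Finite Empty)
    · exact inferInstanceAs (Finite (Fin (ar f)))
  calc Cardinal.mk (Tm S ar V)
      ≤ Cardinal.mk (WType (Branching ar V)) :=
        Cardinal.mk_le_of_injective leftInverse_ofW.injective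
    _ ≤ max (Cardinal.mk (V ⊕ S)) Cardinal.aleph0 := WType.cardinalMk_le_max_aleph0_of_finite
    _ ≤ κ := max_le (by simpa using Cardinal.add_le_of_le hκ hV hS) hκ

end Tm

section Development

open Filter

variable {F : Bool → Type} {arF : ∀ b, F b → ℕ}
variable {Ax : ∀ b, Set (Tm (F b) (arF b) ℕ × Tm (F b) (arF b) ℕ)}

section Evaluation

variable {α β V W : Type} {ops : ∀ b (g : F b), (Fin (arF b g) → α) → α} {b : Bool}

theorem evalTm_bind (ρ : W → α) (t : Tm (F b) (arF b) V) (τ : V → Tm (F b) (arF b) W) :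
    evalTm F arF ops b ρ (t.bind τ) =
      evalTm F arF ops b (fun v => evalTm F arF ops b ρ (τ v)) t := by
  induction t with
  | var v => rfl
  | app f ts ih => simp only [Tm.bind, evalTm, ih]

theorem evalTm_mapVar (ρ : W → α) (t : Tm (F b) (arF b) V) (f : V → W) :
    evalTm F arF ops b ρ (t.mapVar f) = evalTm F arF ops b (fun v => ρ (f v)) t := by
  rw [Tm.mapVar_eq_bind, evalTm_bind]
  rfl

theorem map_evalTm {ops' : ∀ b (g : F b), (Fin (arF b g) → β) → β} {f : α → β}
    (hf : ∀ b g args, f (ops b g args) = ops' b g fun i => f (args i))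
    (ρ : V → α) (t : Tm (F b) (arF b) V) :
    f (evalTm F arF ops b ρ t) = evalTm F arF ops' b (fun v => f (ρ v)) t := by
  induction t with
  | var v => rfl
  | app g ts ih => simp only [evalTm, hf, ih]

theorem eventually_evalTm_eq {ι : Type} {l : Filter ι} {ρ : ι → V → α} {ρ' : V → α}
    (hρ : ∀ v, ∀ᶠ i in l, ρ i v = ρ' v) (t : Tm (F b) (arF b) V) :
    ∀ᶠ i in l, evalTm F arF ops b (ρ i) t = evalTm F arF ops b ρ' t := by
  induction t with
  | var v => exact hρ v
  | app g ts ih =>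
    filter_upwards [eventually_all.2 ih] with i hi
    simp only [evalTm, hi]

end Evaluation

namespace AxCong
variable {b : Bool} {V W : Type} {s t : Tm (F b) (arF b) V}

theorem evalTm_eq (h : AxCong F arF Ax b s t) (M : TModel F arF Ax) (ρ : V → M.carrier) :
    evalTm F arF M.ops b ρ s = evalTm F arF M.ops b ρ t := by
  induction h with
  | refl t => rfl
  | symm _ ih => exact ih.symm
  | trans _ _ ih₁ ih₂ => exact ih₁.trans ih₂
  | congr g ts us _ ih => simp only [evalTm, ih]
  | ax u v huv σ => rw [evalTm_bind, evalTm_bind]; exact M.sat b u v huv _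

theorem bind (h : AxCong F arF Ax b s t) (τ : V → Tm (F b) (arF b) W) :
    AxCong F arF Ax b (s.bind τ) (t.bind τ) := by
  induction h with
  | refl t => exact .refl _
  | symm _ ih => exact ih.symm
  | trans _ _ ih₁ ih₂ => exact ih₁.trans ih₂
  | congr g ts us _ ih => exact .congr g _ _ ih
  | ax u v huv σ => rw [Tm.bind_bind, Tm.bind_bind]; exact .ax u v huv _

theorem bind_congr {τ τ' : V → Tm (F b) (arF b) W} (h : ∀ v, AxCong F arF Ax b (τ v) (τ' v))
    (t : Tm (F b) (arF b) V) : AxCong F arF Ax b (t.bind τ) (t.bind τ') := by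
  induction t with
  | var v => exact h v
  | app f ts ih => exact .congr f _ _ ih

theorem of_mapVar_injective {f : V → W} (hf : f.Injective)
    (h : AxCong F arF Ax b (s.mapVar f) (t.mapVar f)) : AxCong F arF Ax b s t := by
  let τ : W → Tm (F b) (arF b) V := Function.extend f .var fun _ => s
  have τ_f (v : V) : τ (f v) = .var v := hf.extend_apply _ _ v
  simpa only [Tm.mapVar_bind, τ_f, Tm.bind_var] using h.bind τ

end AxCong

/-- The theory `𝕋_b` does not identify distinct variables. -/
def IsConsistent (Ax : ∀ b, Set (Tm (F b) (arF b) ℕ × Tm (F b) (arF b) ℕ)) (b : Bool) : Prop :=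
  ¬ AxCong F arF Ax b (V := ℕ) (.var 0) (.var 1)

/-- The symbol `g` is neither constant nor a projection in `𝕋_b`. Positive arity excludes nullary
symbols. -/
def IsProper (Ax : ∀ b, Set (Tm (F b) (arF b) ℕ × Tm (F b) (arF b) ℕ)) (b : Bool) (g : F b) :
    Prop :=
  1 ≤ arF b g ∧ ¬ IsProj F arF Ax b g ∧ ¬ IsConst F arF Ax b g

theorem IsConsistent.mem_range {b : Bool} (hcons : IsConsistent Ax b) {V W : Type} {f : W → V}
    {t : Tm (F b) (arF b) W} {x : V} (h : AxCong F arF Ax b (t.mapVar f) (.var x)) :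
    x ∈ Set.range f := by
  classical
  by_contra hx
  let τ : V → Tm (F b) (arF b) ℕ := Function.update (fun _ => .var 0) x (.var 1)
  have τ_f (w : W) : τ (f w) = .var 0 := Function.update_of_ne (fun e => hx ⟨w, e⟩) _ _
  have τ_x : τ x = .var 1 := Function.update_self _ _ _
  have cong_zero : AxCong F arF Ax b (t.bind fun _ => .var 0) (.var 0) := by
    simpa only [Tm.mapVar_bind, Tm.bind] using h.bind fun _ => .var 0
  have cong_one : AxCong F arF Ax b (t.bind fun _ => .var 0) (.var 1) := by
    simpa only [Tm.mapVar_bind, Tm.bind, τ_f, τ_x] using h.bind τ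
  exact hcons (cong_zero.symm.trans cong_one)

namespace IsProper
variable {b : Bool} {g : F b} {V W : Type} {w : Fin (arF b g) → V}

theorem isConsistent (hg : IsProper Ax b g) : IsConsistent Ax b := by
  intro h
  let τ : ℕ → Tm (F b) (arF b) ℕ
    | 0 => .var 0
    | _ + 1 => .app g fun j => .var j
  exact hg.2.1 ⟨⟨0, hg.1⟩, h.symm.bind τ⟩

theorem exists_mem_range (hg : IsProper Ax b g) (hw : w.Injective) {f : W → V}
    {t : Tm (F b) (arF b) W} (h : AxCong F arF Ax b (.app g fun j => .var (w j)) (t.mapVar f)) :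
    ∃ j, w j ∈ Set.range f := by
  by_contra! hwf
  let τ : V → Tm (F b) (arF b) ℕ := Function.extend w (fun j => .var j) fun _ => .var (arF b g)
  have τ_w (j) : τ (w j) = .var j := hw.extend_apply _ _ j
  have τ_f (u : W) : τ (f u) = .var (arF b g) :=
    Function.extend_apply' _ _ _ fun ⟨j, hj⟩ => hwf j ⟨u, hj.symm⟩
  refine hg.2.2 ⟨t.bind fun _ => .var (arF b g), Tm.varsIn_bind (fun _ => ?_) t, ?_⟩
  · exact le_refl (arF b g)
  · simpa only [Tm.mapVar_bind, Tm.bind, τ_w, τ_f] using h.bind τ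

theorem not_axCong_var (hg : IsProper Ax b g) (hw : w.Injective) (x : V) :
    ¬ AxCong F arF Ax b (.app g fun j => .var (w j)) (.var x) := by
  intro h
  obtain ⟨j, -, rfl⟩ : ∃ j, w j ∈ Set.range fun _ : Unit => x :=
    hg.exists_mem_range hw (t := .var ()) h
  let τ : V → Tm (F b) (arF b) ℕ := Function.extend w (fun j => .var j) fun _ => .var 0
  have τ_w (j) : τ (w j) = .var j := hw.extend_apply _ _ j
  exact hg.2.1 ⟨j, by simpa only [Tm.bind, τ_w] using h.bind τ⟩

end IsProper

section Layers

/-- The elements whose root does not belong to `𝕋_b`. -/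
abbrev aliens {α : Type} (root : α → Option Bool) (b : Bool) : Set α := {x | root x ≠ some b}

/-- The subset generated by `A` under the operations of `𝕋_b` alone. -/
def TModel.span (M : TModel F arF Ax) (b : Bool) (A : Set M.carrier) : Set M.carrier :=
  Set.range (evalTm F arF M.ops b ((↑) : A → M.carrier))

/-- The elements obtained from the rootless ones by at most `k` alternations between the two
theories. -/
def TModel.layer (M : TModel F arF Ax) (root : M.carrier → Option Bool) : ℕ → Set M.carrier
  | 0 => {x | root x = none}
  | k + 1 => {x | root x = none ∨
      ∃ b, root x = some b ∧ x ∈ M.span b (aliens root b ∩ M.layer root k)}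

/-- The aliens of each theory `𝕋_b` are independent: distinct `𝕋_b`-terms in them, up to provable
equality, have distinct values. -/
def HasFreeLayers (M : TModel F arF Ax) (root : M.carrier → Option Bool) : Prop :=
  ∀ b (T T' : Tm (F b) (arF b) (aliens root b)),
    evalTm F arF M.ops b (↑) T = evalTm F arF M.ops b (↑) T' → AxCong F arF Ax b T T'

namespace TModel
variable {M : TModel F arF Ax} {b : Bool} {A B : Set M.carrier} {root : M.carrier → Option Bool}

theorem subset_span : A ⊆ M.span b A := fun x hx => ⟨.var ⟨x, hx⟩, rfl⟩

theorem evalTm_mem_span {W : Type} {z : W → M.carrier} (hz : ∀ w, z w ∈ M.span b A)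
    (t : Tm (F b) (arF b) W) : evalTm F arF M.ops b z t ∈ M.span b A := by
  choose T hT using hz
  exact ⟨t.bind T, by simp only [evalTm_bind, hT]⟩

theorem span_mono (h : A ⊆ B) : M.span b A ⊆ M.span b B := by
  rintro _ ⟨T, rfl⟩
  exact evalTm_mem_span (fun s => subset_span (h s.2)) T

theorem layer_mono : Monotone (M.layer root) := by
  refine monotone_nat_of_le_succ fun k => ?_
  induction k with
  | zero => exact fun x hx => Or.inl hx
  | succ k ih =>
    rintro x (hx | ⟨b, hx, hspan⟩)
    · exact Or.inl hx
    · exact Or.inr ⟨b, hx, span_mono (Set.inter_subset_inter_right _ ih) hspan⟩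

theorem mem_span_of_mem_layer_succ {k : ℕ} {x : M.carrier} (hx : root x = some b)
    (h : x ∈ M.layer root (k + 1)) : x ∈ M.span b (aliens root b ∩ M.layer root k) := by
  rcases h with h | ⟨c, hc, hspan⟩
  · exact absurd (hx.symm.trans h) (Option.some_ne_none b)
  · obtain rfl : b = c := Option.some.inj (hx.symm.trans hc)
    exact hspan

theorem mem_span_of_mem_layer (b : Bool) {k : ℕ} {x : M.carrier} (h : x ∈ M.layer root k) :
    x ∈ M.span b (aliens root b ∩ M.layer root k) := by
  by_cases hx : root x = some b
  · exact mem_span_of_mem_layer_succ hx (layer_mono k.le_succ h)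
  · exact subset_span ⟨hx, h⟩

/-- The submodel carried by a subset closed under all operations. -/
def restrict (M : TModel F arF Ax) (A : Set M.carrier)
    (hA : ∀ b (g : F b) args, (∀ i, args i ∈ A) → M.ops b g args ∈ A) : TModel F arF Ax where
  carrier := A
  ops b g args := ⟨M.ops b g fun i => args i, hA b g _ fun i => (args i).2⟩
  sat b u v huv ρ := by
    apply Subtype.ext
    have coe_evalTm := map_evalTm (b := b) (f := ((↑) : A → M.carrier)) (ops' := M.ops)
      (ops := fun b g args => ⟨M.ops b g fun i => args i, hA b g _ fun i => (args i).2⟩)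
      (fun _ _ _ => rfl) ρ
    exact (coe_evalTm u).trans ((M.sat b u v huv _).trans (coe_evalTm v).symm)

end TModel

namespace HasFreeLayers
variable {M : TModel F arF Ax} {root : M.carrier → Option Bool} {b : Bool}

theorem mem_of_mem_span (hM : HasFreeLayers M root) (hcons : IsConsistent Ax b)
    {A : Set M.carrier} (hA : A ⊆ aliens root b) {x : M.carrier} (hx : x ∈ aliens root b)
    (hspan : x ∈ M.span b A) : x ∈ A := by
  obtain ⟨T, hT⟩ := hspan
  have cong : AxCong F arF Ax b (T.mapVar (Set.inclusion hA)) (.var ⟨x, hx⟩) :=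
    hM b _ _ ((evalTm_mapVar _ T _).trans hT)
  obtain ⟨s, hs⟩ := hcons.mem_range cong
  obtain rfl : (s : M.carrier) = x := congrArg Subtype.val hs
  exact s.2

variable {V : Type} {z : V → M.carrier} {k : ℕ} {t : Tm (F b) (arF b) V}

theorem evalTm_mem_layer (hM : HasFreeLayers M root) (hcons : IsConsistent Ax b)
    (hz : ∀ v, z v ∈ M.layer root k) (hroot : root (evalTm F arF M.ops b z t) ≠ some b) :
    evalTm F arF M.ops b z t ∈ M.layer root k :=
  (hM.mem_of_mem_span hcons Set.inter_subset_left hroot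
    (TModel.evalTm_mem_span (fun v => TModel.mem_span_of_mem_layer b (hz v)) t)).2

theorem evalTm_mem_layer_succ (hM : HasFreeLayers M root) (hcons : IsConsistent Ax b)
    (hz : ∀ v, z v ∈ M.layer root k) (t : Tm (F b) (arF b) V) :
    evalTm F arF M.ops b z t ∈ M.layer root (k + 1) := by
  by_cases hroot : root (evalTm F arF M.ops b z t) = some b
  · exact Or.inr ⟨b, hroot,
      TModel.evalTm_mem_span (fun v => TModel.mem_span_of_mem_layer b (hz v)) t⟩
  · exact TModel.layer_mono k.le_succ (hM.evalTm_mem_layer hcons hz hroot)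

section ProperSymbol
variable {g : F b} {w : Fin (arF b g) → M.carrier} (hM : HasFreeLayers M root)
  (hg : IsProper Ax b g) (hw : w.Injective) (hroot : ∀ j, w j ∈ aliens root b)
include hM hg hw hroot

theorem root_ops_eq : root (M.ops b g w) = some b := by
  by_contra hne
  let w' (j : Fin (arF b g)) : aliens root b := ⟨w j, hroot j⟩
  have w'_injective : w'.Injective := fun i j hij => hw (congrArg Subtype.val hij)
  exact hg.not_axCong_var w'_injective ⟨_, hne⟩
    (hM b (.app g fun j => .var (w' j)) (.var ⟨_, hne⟩) rfl)

theorem exists_mem_layer_of_ops_mem_layer_succ (h : M.ops b g w ∈ M.layer root (k + 1)) :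
    ∃ j, w j ∈ M.layer root k := by
  let w' (j : Fin (arF b g)) : aliens root b := ⟨w j, hroot j⟩
  have w'_injective : w'.Injective := fun i j hij => hw (congrArg Subtype.val hij)
  have sub : aliens root b ∩ M.layer root k ⊆ aliens root b := Set.inter_subset_left
  obtain ⟨T, hT⟩ := TModel.mem_span_of_mem_layer_succ (hM.root_ops_eq hg hw hroot) h
  have cong : AxCong F arF Ax b (.app g fun j => .var (w' j)) (T.mapVar (Set.inclusion sub)) :=
    hM b _ _ ((evalTm_mapVar _ T (Set.inclusion sub)).trans hT).symm
  obtain ⟨j, s, hs⟩ := hg.exists_mem_range w'_injective cong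
  have s_eq : (s : M.carrier) = w j := congrArg Subtype.val hs
  exact ⟨j, s_eq ▸ s.2.2⟩

end ProperSymbol

variable (hM : HasFreeLayers M root) (hcons : ∀ b, IsConsistent Ax b)
include hM hcons

theorem hom_mem_layer_succ {φ : TModelHom F arF Ax M M}
    (hφ : ∀ x ∈ M.layer root 0, φ.toFun x ∈ M.layer root 1) (k : ℕ) :
    ∀ x ∈ M.layer root k, φ.toFun x ∈ M.layer root (k + 1) := by
  induction k with
  | zero => exact hφ
  | succ k ih =>
    rintro x (hx | ⟨b, -, T, rfl⟩)
    · exact TModel.layer_mono (by omega) (hφ x hx)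
    · rw [map_evalTm φ.map_ops]
      refine hM.evalTm_mem_layer_succ (hcons b) (fun s => ?_) T
      exact ih s s.2.2

theorem ops_mem_layer {g : F b} {args : Fin (arF b g) → M.carrier}
    (hargs : ∀ i, ∃ k, args i ∈ M.layer root k) : ∃ k, M.ops b g args ∈ M.layer root k := by
  choose k hk using hargs
  have args_mem (i) : args i ∈ M.layer root (Finset.univ.sup k) :=
    TModel.layer_mono (Finset.le_sup (Finset.mem_univ i)) (hk i)
  exact ⟨_, hM.evalTm_mem_layer_succ (hcons b) args_mem (.app g .var)⟩

end HasFreeLayers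

/-- Every element is obtained in a unique way from the rootless ones by alternating between the two
theories, `root` naming the theory applied last. Such a model is free on its rootless elements. -/
structure IsLayered (M : TModel F arF Ax) (root : M.carrier → Option Bool) : Prop where
  hasFreeLayers : HasFreeLayers M root
  exists_mem_layer : ∀ x, ∃ k, x ∈ M.layer root k

namespace HasFreeLayers
variable {M : TModel F arF Ax} {root : M.carrier → Option Bool}

theorem isLayered_restrict (hM : HasFreeLayers M root) (hcons : ∀ b, IsConsistent Ax b) :
    IsLayered (M.restrict {x | ∃ k, x ∈ M.layer root k} fun _ _ _ => hM.ops_mem_layer hcons)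
      fun x => root x.1 := by
  set A : Set M.carrier := {x | ∃ k, x ∈ M.layer root k}
  set M' := M.restrict A fun _ _ _ => hM.ops_mem_layer hcons
  have coe_evalTm {b : Bool} {V : Type} (ρ : V → M'.carrier) (T : Tm (F b) (arF b) V) :
      (evalTm F arF M'.ops b ρ T).1 = evalTm F arF M.ops b (fun v => (ρ v).1) T :=
    map_evalTm (ops := M'.ops) (f := fun x : M'.carrier => x.1) (fun _ _ _ => rfl) ρ T
  refine ⟨fun b T T' h => ?_, ?_⟩
  · let f (s : aliens (fun x : M'.carrier => root x.1) b) : aliens root b := ⟨s.1.1, s.2⟩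
    have f_injective : f.Injective := fun s t hst =>
      Subtype.ext (Subtype.ext (Subtype.mk.inj hst))
    refine AxCong.of_mapVar_injective f_injective (hM b _ _ ?_)
    rw [evalTm_mapVar, evalTm_mapVar]
    have := congrArg Subtype.val h
    rwa [coe_evalTm, coe_evalTm] at this
  · suffices h : ∀ k x (hx : x ∈ M.layer root k),
        (⟨x, k, hx⟩ : M'.carrier) ∈ M'.layer (fun x => root x.1) k from
      fun ⟨x, k, hx⟩ => ⟨k, h k x hx⟩
    intro k
    induction k with
    | zero => exact fun x hx => hx
    | succ k ih =>
      rintro x (hx | ⟨b, hx, T, rfl⟩)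
      · exact Or.inl hx
      · let f (s : ↥(aliens root b ∩ M.layer root k)) :
            ↥(aliens (fun x => root x.1) b ∩ M'.layer (fun x => root x.1) k) :=
          ⟨⟨s, k, s.2.2⟩, s.2.1, ih s s.2.2⟩
        refine Or.inr ⟨b, hx, T.mapVar f, ?_⟩
        exact Subtype.ext ((coe_evalTm _ _).trans (evalTm_mapVar _ T _))

end HasFreeLayers

section Extension
open Classical in
/-- One step of extending a map along layer `b`: elements of the span of the aliens are sent to the
values of their representing terms, all others by `e`. -/
noncomputable def layerLift {M N : TModel F arF Ax} (root : M.carrier → Option Bool) (b : Bool)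
    (e : M.carrier → N.carrier) (x : M.carrier) : N.carrier :=
  if h : x ∈ M.span b (aliens root b) then
    evalTm F arF N.ops b (fun s : aliens root b => e s) h.choose
  else e x

/-- Approximations to the homomorphism extending the restriction of `φ` to the rootless elements;
the `k`-th one is correct on `layer k`. -/
noncomputable def approxHom {M N : TModel F arF Ax} (root : M.carrier → Option Bool)
    (φ : M.carrier → N.carrier) : ℕ → M.carrier → N.carrier
  | 0 => φ
  | k + 1 => fun x => match root x with
    | none => φ x
    | some b => layerLift root b (approxHom root φ k) x

variable {M N : TModel F arF Ax} {root : M.carrier → Option Bool} {b : Bool}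

theorem HasFreeLayers.layerLift_evalTm (hM : HasFreeLayers M root) (e : M.carrier → N.carrier)
    (T : Tm (F b) (arF b) (aliens root b)) :
    layerLift root b e (evalTm F arF M.ops b (↑) T) =
      evalTm F arF N.ops b (fun s : aliens root b => e s) T := by
  have h : evalTm F arF M.ops b (↑) T ∈ M.span b (aliens root b) := ⟨T, rfl⟩
  rw [layerLift, dif_pos h]
  exact (hM b _ _ h.choose_spec).evalTm_eq N _

theorem approxHom_of_root_eq_none {φ : M.carrier → N.carrier} {x : M.carrier}
    (hx : root x = none) (k : ℕ) : approxHom root φ k x = φ x := by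
  cases k with
  | zero => rfl
  | succ k => simp only [approxHom, hx]

theorem HasFreeLayers.approxHom_succ_evalTm (hM : HasFreeLayers M root) (φ : M.carrier → N.carrier)
    {T : Tm (F b) (arF b) (aliens root b)} (hT : root (evalTm F arF M.ops b (↑) T) = some b)
    (k : ℕ) : approxHom root φ (k + 1) (evalTm F arF M.ops b (↑) T) =
      evalTm F arF N.ops b (fun s : aliens root b => approxHom root φ k s) T := by
  simp only [approxHom, hT, hM.layerLift_evalTm]

theorem HasFreeLayers.exists_eventually_approxHom_eq (hM : HasFreeLayers M root)
    (φ : M.carrier → N.carrier) (k : ℕ) :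
    ∀ x ∈ M.layer root k, ∃ y, ∀ᶠ l in atTop, approxHom root φ l x = y := by
  induction k with
  | zero => exact fun x hx => ⟨φ x, .of_forall (approxHom_of_root_eq_none hx)⟩
  | succ k ih =>
    rintro x (hx | ⟨b, hx, T, rfl⟩)
    · exact ⟨φ x, .of_forall (approxHom_of_root_eq_none hx)⟩
    · choose y hy using fun s : ↥(aliens root b ∩ M.layer root k) => ih s s.2.2
      have sub : aliens root b ∩ M.layer root k ⊆ aliens root b := Set.inter_subset_left
      refine ⟨evalTm F arF N.ops b y T, ?_⟩
      rw [← map_add_atTop_eq_nat 1, eventually_map]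
      filter_upwards [eventually_evalTm_eq (ops := N.ops) hy T] with l hl
      have val_eq : evalTm F arF M.ops b (↑) T =
          evalTm F arF M.ops b (↑) (T.mapVar (Set.inclusion sub)) :=
        (evalTm_mapVar ((↑) : aliens root b → M.carrier) T (Set.inclusion sub)).symm
      rw [val_eq] at hx ⊢
      rw [hM.approxHom_succ_evalTm φ hx, evalTm_mapVar]
      exact hl

theorem IsLayered.exists_hom (hM : IsLayered M root) (φ : M.carrier → N.carrier) :
    ∃ f : TModelHom F arF Ax M N, ∀ x, root x = none → f.toFun x = φ x := by
  have stabilizes (x : M.carrier) : ∃ y, ∀ᶠ l in atTop, approxHom root φ l x = y :=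
    let ⟨k, hk⟩ := hM.exists_mem_layer x
    hM.hasFreeLayers.exists_eventually_approxHom_eq φ k x hk
  choose e he using stabilizes
  have e_evalTm (b : Bool) (T : Tm (F b) (arF b) (aliens root b)) :
      e (evalTm F arF M.ops b (↑) T) = evalTm F arF N.ops b (fun s : aliens root b => e s) T := by
    by_cases hroot : root (evalTm F arF M.ops b (↑) T) = some b
    · obtain ⟨l, hl, hl'⟩ := (((tendsto_add_atTop_nat 1).eventually (he _)).and
        (eventually_evalTm_eq (fun s : aliens root b => he s) T)).exists
      rw [← hl, hM.hasFreeLayers.approxHom_succ_evalTm φ hroot, hl']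
    · exact ((hM.hasFreeLayers b T (.var ⟨_, hroot⟩) rfl).evalTm_eq N fun s => e s).symm
  refine ⟨⟨e, fun b g args => ?_⟩, fun x hx => ?_⟩
  · have args_mem (i) : args i ∈ M.span b (aliens root b) := by
      obtain ⟨k, hk⟩ := hM.exists_mem_layer (args i)
      exact TModel.span_mono Set.inter_subset_left (TModel.mem_span_of_mem_layer b hk)
    choose T hT using args_mem
    calc e (M.ops b g args) = e (evalTm F arF M.ops b (↑) (.app g T)) := by simp only [evalTm, hT]
      _ = N.ops b g fun i => evalTm F arF N.ops b (fun s : aliens root b => e s) (T i) :=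
        e_evalTm b _
      _ = N.ops b g fun i => e (args i) := by simp only [← e_evalTm, hT]
  · obtain ⟨l, hl⟩ := (he x).exists
    exact hl.symm.trans (approxHom_of_root_eq_none hx l)

end Extension

section FixedPoint

/-- The endomorphism `σ` commutes with every endomorphism fixing `A` pointwise. -/
def CommutesOver {M : TModel F arF Ax} (σ : TModelHom F arF Ax M M) (A : Set M.carrier) : Prop :=
  ∀ φ : TModelHom F arF Ax M M, (∀ a ∈ A, φ.toFun a = a) →
    ∀ x, φ.toFun (σ.toFun x) = σ.toFun (φ.toFun x)

namespace IsLayered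
variable {M : TModel F arF Ax} {root : M.carrier → Option Bool} {A : Set M.carrier}
  {σ : TModelHom F arF Ax M M} {x : M.carrier}
  (hM : IsLayered M root) (hA : ∀ a ∈ A, root a = none) (hσ : CommutesOver σ A)
include hM hA hσ

theorem exists_commuting_update (hroot : root x = none) (hx : x ∉ A) (y : M.carrier) :
    ∃ φ : TModelHom F arF Ax M M, φ.toFun x = y ∧
      (∀ z, root z = none → z ≠ x → φ.toFun z = z) ∧
      ∀ z, φ.toFun (σ.toFun z) = σ.toFun (φ.toFun z) := by
  classical
  obtain ⟨φ, hφ⟩ := hM.exists_hom (Function.update id x y)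
  have φ_of_ne (z) (hz : root z = none) (hzx : z ≠ x) : φ.toFun z = z :=
    (hφ z hz).trans (Function.update_of_ne hzx y id)
  refine ⟨φ, (hφ x hroot).trans (Function.update_self x y id), φ_of_ne, hσ φ fun a ha => ?_⟩
  exact φ_of_ne a (hA a ha) fun hax => hx (hax ▸ ha)

theorem root_apply_ne_none (hσ_inj : σ.toFun.Injective) (hroot : root x = none) (hx : x ∉ A)
    (hne : σ.toFun x ≠ x) {x' : M.carrier} (hx' : x' ≠ x) : root (σ.toFun x) ≠ none := by
  intro hσx
  obtain ⟨φ, φ_x, φ_of_ne, φ_comm⟩ := hM.exists_commuting_update hA hσ hroot hx x'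
  refine hx' (hσ_inj ?_)
  calc σ.toFun x' = φ.toFun (σ.toFun x) := by rw [φ_comm, φ_x]
    _ = σ.toFun x := φ_of_ne _ hσx hne

theorem exists_apply_mem_layer_of_apply_mem_layer_succ (hcons : ∀ b, IsConsistent Ax b)
    (hσ_inj : σ.toFun.Injective) {b : Bool} {g : F !b} (hg : IsProper Ax (!b) g)
    {U : Set M.carrier} (hU : U.Infinite)
    (hU_spec : ∀ x ∈ U, root x = none ∧ x ∉ A ∧ root (σ.toFun x) = some b) (hx : x ∈ U) {k : ℕ}
    (h : σ.toFun x ∈ M.layer root (k + 1)) : ∃ y ∈ U, σ.toFun y ∈ M.layer root k := by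
  obtain ⟨root_x, x_notMem, root_σx⟩ := hU_spec x hx
  have := hU.to_subtype
  let v : Fin (arF (!b) g) ↪ U := Fin.valEmbedding.trans (Infinite.natEmbedding U)
  have σ_v_injective : Function.Injective fun j => σ.toFun (v j) :=
    hσ_inj.comp (Subtype.val_injective.comp v.injective)
  have σ_v_mem (j) : σ.toFun (v j) ∈ aliens root !b := by
    simp [aliens, (hU_spec _ (v j).2).2.2]
  set e := M.ops (!b) g fun j => v j
  have e_mem : e ∈ M.layer root 1 :=
    hM.hasFreeLayers.evalTm_mem_layer_succ (hcons !b) (fun j => (hU_spec _ (v j).2).1) (.app g .var)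
  obtain ⟨φ, φ_x, φ_of_ne, φ_comm⟩ := hM.exists_commuting_update hA hσ root_x x_notMem e
  have φ_mem_layer := hM.hasFreeLayers.hom_mem_layer_succ hcons (φ := φ) (k := k) fun z hz => by
    by_cases hzx : z = x
    · exact hzx ▸ φ_x.symm ▸ e_mem
    · exact (φ_of_ne z hz hzx).symm ▸ TModel.layer_mono zero_le_one hz
  have σe_eq : φ.toFun (σ.toFun x) = M.ops (!b) g fun j => σ.toFun (v j) := by
    rw [φ_comm, φ_x, σ.map_ops]
  have root_σe := hM.hasFreeLayers.root_ops_eq hg σ_v_injective σ_v_mem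
  -- `φ` raises layers by at most one; here it does not, because the root changes from `b` to `!b`.
  have σe_mem : φ.toFun (σ.toFun x) ∈ M.layer root (k + 1) := by
    obtain ⟨T, hT⟩ := TModel.mem_span_of_mem_layer_succ root_σx h
    rw [← hT, map_evalTm φ.map_ops] at σe_eq ⊢
    refine hM.hasFreeLayers.evalTm_mem_layer (hcons b) (fun s => φ_mem_layer s s.2.2) ?_
    simp [σe_eq, root_σe]
  obtain ⟨j, hj⟩ := hM.hasFreeLayers.exists_mem_layer_of_ops_mem_layer_succ hg σ_v_injective
    σ_v_mem (σe_eq ▸ σe_mem)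
  exact ⟨v j, (v j).2, hj⟩

theorem exists_fixed (hproper : ∀ b, ∃ g, IsProper Ax b g) (hσ_inj : σ.toFun.Injective)
    (hinf : {x | root x = none ∧ x ∉ A}.Infinite) :
    ∃ x, root x = none ∧ x ∉ A ∧ σ.toFun x = x := by
  by_contra! hne
  set S := {x | root x = none ∧ x ∉ A}
  have := hinf.to_subtype
  have root_ne_none (x : S) : root (σ.toFun x) ≠ none := by
    obtain ⟨x', hx'⟩ := exists_ne x
    exact hM.root_apply_ne_none hA hσ hσ_inj x.2.1 x.2.2 (hne x x.2.1 x.2.2)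
      (Subtype.coe_ne_coe.2 hx')
  obtain ⟨r, hr⟩ := Finite.exists_infinite_fiber fun x : S => root (σ.toFun x)
  set U : Set M.carrier := Subtype.val '' ((fun x : S => root (σ.toFun x)) ⁻¹' {r})
  have hU : U.Infinite := (Set.infinite_coe_iff.1 hr).image Subtype.val_injective.injOn
  obtain ⟨_, x₀, rfl, rfl⟩ := hU.nonempty
  obtain ⟨b, hb⟩ := Option.ne_none_iff_exists'.1 (root_ne_none x₀)
  have hU_spec : ∀ x ∈ U, root x = none ∧ x ∉ A ∧ root (σ.toFun x) = some b := by
    rintro _ ⟨x, hx, rfl⟩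
    exact ⟨x.2.1, x.2.2, hx.trans hb⟩
  have notMem_layer (k : ℕ) : ∀ x ∈ U, σ.toFun x ∉ M.layer root k := by
    induction k with
    | zero => exact fun x hx h => Option.some_ne_none b ((hU_spec x hx).2.2.symm.trans h)
    | succ k ih =>
      intro x hx h
      obtain ⟨g, hg⟩ := hproper !b
      obtain ⟨y, hy, hy'⟩ := hM.exists_apply_mem_layer_of_apply_mem_layer_succ hA hσ
        (fun b => (hproper b).choose_spec.isConsistent) hσ_inj hg hU hU_spec hx h
      exact ih y hy hy'
  obtain ⟨k, hk⟩ := hM.exists_mem_layer (σ.toFun x₀)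
  exact notMem_layer k x₀ ⟨x₀, rfl, rfl⟩ hk

end IsLayered
end FixedPoint

section Existence

/-- Provable equality in `𝕋_b` of terms with variables in `V`. -/
def AxCong.setoid (Ax : ∀ b, Set (Tm (F b) (arF b) ℕ × Tm (F b) (arF b) ℕ)) (b : Bool) (V : Type) :
    Setoid (Tm (F b) (arF b) V) :=
  ⟨AxCong F arF Ax b, .refl, .symm, .trans⟩

/-- The free algebra of the single theory `𝕋_b` on `V`. -/
def FreeAlg (Ax : ∀ b, Set (Tm (F b) (arF b) ℕ × Tm (F b) (arF b) ℕ)) (b : Bool) (V : Type) :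
    Type :=
  Quotient (AxCong.setoid Ax b V)

namespace FreeAlg
variable {b : Bool} {V : Type}

/-- The element of the free algebra named by a term. -/
def mk (t : Tm (F b) (arF b) V) : FreeAlg Ax b V :=
  Quotient.mk _ t

/-- A term naming a given element of the free algebra. -/
noncomputable def rep (q : FreeAlg Ax b V) : Tm (F b) (arF b) V :=
  Quotient.out q

theorem mk_eq_mk {s t : Tm (F b) (arF b) V} :
    (mk s : FreeAlg Ax b V) = mk t ↔ AxCong F arF Ax b s t :=
  Quotient.eq

theorem mk_rep (q : FreeAlg Ax b V) : mk q.rep = q :=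
  Quotient.out_eq q

theorem rep_mk (t : Tm (F b) (arF b) V) : AxCong F arF Ax b (mk t : FreeAlg Ax b V).rep t :=
  mk_eq_mk.1 (mk_rep _)

theorem mk_var_injective (hcons : IsConsistent Ax b) :
    Function.Injective fun v : V => (mk (.var v) : FreeAlg Ax b V) := by
  intro x y h
  obtain ⟨-, rfl⟩ := hcons.mem_range (f := fun _ : Unit => x) (t := .var ()) (mk_eq_mk.1 h)
  rfl

theorem cardinalMk_compl_range_var {g : F b} (hg : IsProper Ax b g) [Infinite V]
    (hF : Cardinal.mk (F b) ≤ Cardinal.mk V) :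
    Cardinal.mk ↥(Set.range fun v : V => (mk (.var v) : FreeAlg Ax b V))ᶜ = Cardinal.mk V := by
  apply le_antisymm
  · calc Cardinal.mk ↥(Set.range fun v : V => (mk (.var v) : FreeAlg Ax b V))ᶜ
        ≤ Cardinal.mk (FreeAlg Ax b V) := Cardinal.mk_set_le _
      _ ≤ Cardinal.mk (Tm (F b) (arF b) V) := Cardinal.mk_quotient_le
      _ ≤ Cardinal.mk V := Tm.cardinalMk_le (Cardinal.aleph0_le_mk V) hF le_rfl
  · obtain ⟨ι⟩ : Nonempty (V × ℕ ↪ V) := by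
      rw [← Cardinal.le_def, Cardinal.mk_prod]
      simp
    have ι_injective (k : V) : Function.Injective fun j : Fin (arF b g) => ι (k, j) := by
      intro i j hij
      exact Fin.ext (Prod.ext_iff.1 (ι.injective hij)).2
    let e (k : V) : ↥(Set.range fun v : V => (mk (.var v) : FreeAlg Ax b V))ᶜ :=
      ⟨mk (.app g fun j => .var (ι (k, j))), fun ⟨x, hx⟩ =>
        hg.not_axCong_var (ι_injective k) x (mk_eq_mk.1 hx).symm⟩
    refine Cardinal.mk_le_of_injective (f := e) fun k k' h => ?_
    obtain ⟨i, j, hij⟩ := hg.exists_mem_range (ι_injective k)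
      (f := fun j : Fin (arF b g) => ι (k', j)) (t := .app g .var)
      (mk_eq_mk.1 (congrArg Subtype.val h))
    exact (Prod.ext_iff.1 (ι.injective hij)).1.symm

end FreeAlg

section Gluing
variable {X : Type} {root : X → Option Bool} (β : ∀ b, X ≃ FreeAlg Ax b (aliens root b))

/-- The operations transported from the free algebras along `β`. -/
noncomputable def glueOps (b : Bool) (g : F b) (args : Fin (arF b g) → X) : X :=
  (β b).symm (.mk (.app g fun i => (β b (args i)).rep))

theorem evalTm_glueOps {b : Bool} {V : Type} (ρ : V → X) (t : Tm (F b) (arF b) V) :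
    evalTm F arF (glueOps β) b ρ t = (β b).symm (.mk (t.bind fun v => (β b (ρ v)).rep)) := by
  induction t with
  | var v => exact ((β b).symm_apply_eq.2 (FreeAlg.mk_rep _)).symm
  | app g ts ih =>
    simp only [evalTm, ih, Tm.bind, glueOps, Equiv.apply_symm_apply]
    exact congrArg _ (FreeAlg.mk_eq_mk.2 (.congr g _ _ fun i => FreeAlg.rep_mk _))

/-- A set that is, for each `b`, identified with the free algebra of `𝕋_b` on its own subset of
aliens, as a model of the combined theory. -/
noncomputable def TModel.glue : TModel F arF Ax where
  carrier := X
  ops := glueOps β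
  sat b u v huv ρ := by
    rw [evalTm_glueOps, evalTm_glueOps]
    exact congrArg _ (FreeAlg.mk_eq_mk.2 (.ax u v huv _))

theorem hasFreeLayers_glue (hβ : ∀ b (s : aliens root b), β b s = .mk (.var s)) :
    HasFreeLayers (TModel.glue β) root := by
  intro b T T' h
  have bind_rep (T : Tm (F b) (arF b) (aliens root b)) :
      AxCong F arF Ax b (T.bind fun s : aliens root b => (β b s).rep) T := by
    have cong (s : aliens root b) : AxCong F arF Ax b (β b s).rep (.var s) :=
      hβ b s ▸ FreeAlg.rep_mk _
    simpa only [Tm.bind_var] using AxCong.bind_congr cong T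
  have mk_eq := (β b).symm.injective
    ((evalTm_glueOps β _ T).symm.trans (h.trans (evalTm_glueOps β _ T')))
  exact (bind_rep T).symm.trans ((FreeAlg.mk_eq_mk.1 mk_eq).trans (bind_rep T'))

end Gluing

theorem cardinalMk_of_forall_mk_mem {C : Type} [Infinite C] {S : Set (C × Option Bool)}
    {r : Option Bool} (hS : ∀ c, (c, r) ∈ S) : Cardinal.mk S = Cardinal.mk C := by
  apply le_antisymm
  · calc Cardinal.mk S ≤ Cardinal.mk (C × Option Bool) := Cardinal.mk_set_le S
      _ = Cardinal.mk C := by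
        rw [Cardinal.mk_prod, Cardinal.lift_id, Cardinal.lift_id]
        exact Cardinal.mul_eq_left (Cardinal.aleph0_le_mk C)
          (Cardinal.mk_lt_aleph0.le.trans (Cardinal.aleph0_le_mk C)) (Cardinal.mk_ne_zero _)
  · exact Cardinal.mk_le_of_injective (f := fun c => (⟨(c, r), hS c⟩ : S)) fun c c' h =>
      congrArg (fun s : S => s.1.1) h

theorem exists_equiv_freeAlg {b : Bool} {g : F b} (hg : IsProper Ax b g) {C : Type} [Infinite C]
    (hF : Cardinal.mk (F b) ≤ Cardinal.mk C) :
    ∃ β : C × Option Bool ≃ FreeAlg Ax b (aliens (Prod.snd : C × Option Bool → Option Bool) b),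
      ∀ s : aliens (Prod.snd : C × Option Bool → Option Bool) b, β s = .mk (.var s) := by
  set A := aliens (Prod.snd : C × Option Bool → Option Bool) b
  have card_A : Cardinal.mk A = Cardinal.mk C :=
    cardinalMk_of_forall_mk_mem (r := none) fun _ => (Option.some_ne_none b).symm
  have card_compl_A : Cardinal.mk ↥Aᶜ = Cardinal.mk C :=
    cardinalMk_of_forall_mk_mem (r := some b) fun _ => not_not_intro rfl
  have infinite_A : Infinite A :=
    Cardinal.infinite_iff.2 ((Cardinal.aleph0_le_mk C).trans_eq card_A.symm)
  refine Cardinal.extend_function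
    ⟨fun s : A => FreeAlg.mk (.var s), FreeAlg.mk_var_injective hg.isConsistent⟩ (Cardinal.eq.1 ?_)
  rw [card_compl_A, ← card_A]
  exact (FreeAlg.cardinalMk_compl_range_var hg (hF.trans_eq card_A.symm)).symm

theorem exists_isLayered (hproper : ∀ b, ∃ g, IsProper Ax b g) (I : Type) :
    ∃ (M : TModel F arF Ax) (root : M.carrier → Option Bool) (c : I → M.carrier),
      IsLayered M root ∧ c.Injective ∧ (∀ i, root (c i) = none) ∧
        {x | root x = none ∧ x ∉ Set.range c}.Infinite := by
  let C : Type := I ⊕ ℕ ⊕ Σ b, F b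
  have exists_equiv (b) := exists_equiv_freeAlg (C := C) (hproper b).choose_spec
    (Cardinal.mk_le_of_injective (Sum.inr_injective.comp
      (Sum.inr_injective.comp sigma_mk_injective)))
  choose β hβ using exists_equiv
  have layered := (hasFreeLayers_glue β hβ).isLayered_restrict
    fun b => (hproper b).choose_spec.isConsistent
  let ν (x : C) : {x | ∃ k, x ∈ (TModel.glue β).layer Prod.snd k} := ⟨(x, none), 0, rfl⟩
  have ν_injective : ν.Injective := fun x y h => congrArg (fun z => z.1.1) h
  refine ⟨_, _, fun i => ν (.inl i), layered, ν_injective.comp Sum.inl_injective, fun _ => rfl, ?_⟩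
  refine Set.infinite_of_injective_forall_mem (f := fun k : ℕ => ν (.inr (.inl k)))
    (ν_injective.comp (Sum.inr_injective.comp Sum.inl_injective)) fun k => ⟨rfl, ?_⟩
  rintro ⟨i, hi⟩
  exact Sum.inl_ne_inr (ν_injective hi)

end Existence

end Layers

section Isotropy

/-- `M` is free on the family `gens`, indexed by an arbitrary type. -/
def IsFreeOver (M : TModel F arF Ax) {I : Type} (gens : I → M.carrier) : Prop :=
  ∀ (N : TModel F arF Ax) (a : I → N.carrier),
    ∃! h : TModelHom F arF Ax M N, ∀ i, h.toFun (gens i) = a i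

/-- Naturality of a family of endomorphisms of codomains, indexed by the morphisms out of `M₀`, as
an endomorphism of the forgetful functor on the coslice under `M₀`. -/
def IsNatural {M₀ : TModel F arF Ax}
    (π : ∀ M : TModel F arF Ax, TModelHom F arF Ax M₀ M → TModelHom F arF Ax M M) : Prop :=
  ∀ (M M' : TModel F arF Ax) (h : TModelHom F arF Ax M₀ M) (h' : TModelHom F arF Ax M M'),
    TModelHom.comp F arF Ax h' (π M h) =
      TModelHom.comp F arF Ax (π M' (TModelHom.comp F arF Ax h' h)) h'

variable {M₀ : TModel F arF Ax} {I : Type} {gens : I → M₀.carrier}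
  {π : ∀ M : TModel F arF Ax, TModelHom F arF Ax M₀ M → TModelHom F arF Ax M M}

theorem IsFreeOver.hom_ext (hfree : IsFreeOver M₀ gens) {N : TModel F arF Ax}
    {f f' : TModelHom F arF Ax M₀ N} (h : ∀ i, f.toFun (gens i) = f'.toFun (gens i)) : f = f' :=
  (hfree N fun i => f'.toFun (gens i)).unique h fun _ => rfl

theorem IsNatural.apply_eq (hπ : IsNatural π) {M N : TModel F arF Ax}
    {h : TModelHom F arF Ax M₀ M} {h' : TModelHom F arF Ax M₀ N} {f : TModelHom F arF Ax M N}
    (hf : TModelHom.comp F arF Ax f h = h') (x : M.carrier) :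
    f.toFun ((π M h).toFun x) = (π N h').toFun (f.toFun x) :=
  hf ▸ congrArg (fun k => k.toFun x) (hπ M N h f)

theorem IsNatural.commutesOver (hπ : IsNatural π) (hfree : IsFreeOver M₀ gens)
    {M : TModel F arF Ax} (h : TModelHom F arF Ax M₀ M) :
    CommutesOver (π M h) (Set.range fun i => h.toFun (gens i)) := by
  intro φ hφ x
  exact hπ.apply_eq (hfree.hom_ext fun i => hφ _ ⟨i, rfl⟩) x

theorem IsNatural.eq_id (hπ : IsNatural π) (hproper : ∀ b, ∃ g, IsProper Ax b g)
    (hfree : IsFreeOver M₀ gens) (hinj : ∀ M h, (π M h).toFun.Injective) (N : TModel F arF Ax)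
    (h : TModelHom F arF Ax M₀ N) : π N h = TModelHom.id F arF Ax N := by
  obtain ⟨M, root, c, hM, c_injective, root_c, infinite⟩ := exists_isLayered hproper I
  obtain ⟨u, hu, -⟩ := hfree M c
  have comm : CommutesOver (π M u) (Set.range c) := by
    simpa only [hu] using hπ.commutesOver hfree u
  obtain ⟨x, root_x, x_notMem, hx⟩ :=
    hM.exists_fixed (Set.forall_mem_range.2 root_c) comm hproper (hinj M u) infinite
  ext a
  obtain ⟨f, hf⟩ := hM.exists_hom (Function.extend c (fun i => h.toFun (gens i)) fun _ => a)
  have f_x : f.toFun x = a := (hf x root_x).trans (Function.extend_apply' _ _ _ x_notMem)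
  have f_u (i) : f.toFun (u.toFun (gens i)) = h.toFun (gens i) := by
    rw [hu, hf _ (root_c i), c_injective.extend_apply]
  calc (π N h).toFun a = (π N h).toFun (f.toFun x) := by rw [f_x]
    _ = f.toFun ((π M u).toFun x) := (hπ.apply_eq (hfree.hom_ext f_u) x).symm
    _ = a := by rw [hx, f_x]

theorem inner_automorphisms_trivial_general (hproper : ∀ b, ∃ g, IsProper Ax b g)
    (hfree : IsFreeOver M₀ gens) :
    (IsNatural π ∧ ∀ M h, (π M h).toFun.Injective) ↔ ∀ M h, π M h = TModelHom.id F arF Ax M := by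
  refine ⟨fun h => h.1.eq_id hproper hfree h.2, fun h => ⟨fun M M' k k' => ?_, fun M k => ?_⟩⟩
  · rw [h, h]
    rfl
  · rw [h]
    exact Function.injective_id

end Isotropy

end Development

section Statement
variable (F : Bool → Type) (arF : ∀ b, F b → ℕ) (n : ℕ)
variable (Ax : ∀ b, Set (Tm (F b) (arF b) ℕ × Tm (F b) (arF b) ℕ))

/-- Corollary on inner automorphisms: under the hypotheses of the main theorem,
a family of endomorphisms indexed by morphisms out of the free model `Mₙ` is an
element of the covariant isotropy group iff every component is the identity; in
particular every categorical inner automorphism of `Mₙ` is the identity. -/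
theorem inner_automorphisms_trivial
    (hyp : ∀ b, ∃ g : F b, 1 ≤ arF b g ∧ ¬ IsProj F arF Ax b g ∧ ¬ IsConst F arF Ax b g)
    (M₀ : TModel F arF Ax) (gens : Fin n → M₀.carrier)
    (hfree : IsFreeOn F arF n Ax M₀ gens) :
    (∀ π : ∀ M : TModel F arF Ax, TModelHom F arF Ax M₀ M → TModelHom F arF Ax M M,
      ((∀ (M M' : TModel F arF Ax) (h : TModelHom F arF Ax M₀ M)
          (h' : TModelHom F arF Ax M M'),
          TModelHom.comp F arF Ax h' (π M h) =
            TModelHom.comp F arF Ax (π M' (TModelHom.comp F arF Ax h' h)) h') ∧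
        (∀ M h, Function.Bijective (π M h).toFun)) ↔
      (∀ M h, π M h = TModelHom.id F arF Ax M)) ∧
    (∀ h : TModelHom F arF Ax M₀ M₀,
      (∃ π : ∀ M : TModel F arF Ax, TModelHom F arF Ax M₀ M → TModelHom F arF Ax M M,
        (∀ (M M' : TModel F arF Ax) (hh : TModelHom F arF Ax M₀ M)
          (h' : TModelHom F arF Ax M M'),
          TModelHom.comp F arF Ax h' (π M hh) =
            TModelHom.comp F arF Ax (π M' (TModelHom.comp F arF Ax h' hh)) h') ∧
        (∀ M hh, Function.Bijective (π M hh).toFun) ∧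
        π M₀ (TModelHom.id F arF Ax M₀) = h) →
      h = TModelHom.id F arF Ax M₀) := by
  have general (π) := inner_automorphisms_trivial_general (π := π) hyp hfree
  refine ⟨fun π => ⟨fun h => (general π).1 ⟨h.1, fun M k => (h.2 M k).injective⟩, fun h => ?_⟩, ?_⟩
  · refine ⟨((general π).2 h).1, fun M k => ?_⟩
    rw [h]
    exact Function.bijective_id
  · rintro h ⟨π, natural, bijective, rfl⟩
    exact (general π).1 ⟨natural, fun M k => (bijective M k).injective⟩ _ _

end Statement
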